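/- Suppose L/k is a biquadratic extension of number fields and k₁, k₂, k₃ are the three quadratic extensions of k contained in L. Then |Δ_L · Δ_k²| = |Δ_{k₁} · Δ_{k₂} · Δ_{k₃}|, where Δ_F ∈ ℤ denotes the absolute discriminant of a number field F. -/

import Mathlib

open NumberField Module

/-!
Let `D(L/F)` be the different ideal of `L / F` in `𝓞 L`. The formula follows from the identity
`D(L/k) = D(L/k₁) * D(L/k₂) * D(L/k₃)` (`differentIdeal_eq_prod`): taking absolute norms and using
`|Δ_L| = N(D(L/F)) * |Δ_F| ^ [L : F]` for `F = k, k₁, k₂, k₃` gives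
`(Δ_L * Δ_k ^ 2) ^ 2 = (Δ_{k₁} * Δ_{k₂} * Δ_{k₃}) ^ 2`.

The identity of differents is proved locally at each maximal ideal `P` of `𝓞 L`. Suppose that
`x : 𝓞 L` is such that the conductor of `(𝓞 k)[x]` in `𝓞 L` is not contained in `P`. Then the
same holds for the larger rings `(𝓞 kᵢ)[x]`, and since the conductor times the different is the
ideal generated by `f'(x)`, with `f` the minimal polynomial of `x` over the base
(`conductor_mul_differentIdeal`), each different is generated locally at `P` by `f'(x)`. Now
`f'(x) = ∏_{s ≠ 1} (x - s x)` over `k`, and over `kᵢ` it is `x - sᵢ x`, where `sᵢ` is the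
involution fixing `kᵢ`. As `s₁, s₂, s₃` are the three nontrivial automorphisms of `L / k`, the
identity holds at `P`.

Such an `x` exists for every `P` (`exists_conductor_not_le`). With `p = P ∩ 𝓞 k` and
`p 𝓞 L = P ^ e * J`, `P ∤ J`, choose `x ∈ J` generating the multiplicative group of `𝓞 L / P` and
such that `x ^ q - x` is a uniformizer at `P`, where `q = #(𝓞 L / P)`. Then
`𝓞 L = (𝓞 k)[x] + P ^ e`, so that multiplication by `x` maps `𝓞 L` into `(𝓞 k)[x] + p 𝓞 L`, and
Cayley–Hamilton on `𝓞 L / (𝓞 k)[x]` yields an element of the conductor congruent modulo `P` to a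
power of `x`, hence outside `P`.
-/

/-! ### Derivatives of minimal polynomials -/

open Polynomial in
/-- If `x` generates the Galois extension `L / K` and `f` is its minimal polynomial, then
`f'(x) = ∏_{σ ≠ 1} (x - σ x)`, because `f = ∏_σ (X - σ x)`. -/
theorem aeval_derivative_minpoly_eq_prod {K L : Type*} [Field K] [Field L] [Algebra K L]
    [FiniteDimensional K L] [IsGalois K L] [DecidableEq (L ≃ₐ[K] L)] (x : L)
    (hx : Algebra.adjoin K {x} = ⊤) :
    aeval x (derivative (minpoly K x)) =
      ∏ σ ∈ (Finset.univ : Finset (L ≃ₐ[K] L)).erase 1, (x - σ x) := by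
  classical
  have hint : IsIntegral K x := Algebra.IsIntegral.isIntegral x
  have hinj : Function.Injective (fun σ : L ≃ₐ[K] L ↦ σ x) := by
    intro σ τ h
    have : (σ : L →ₐ[K] L) = τ := AlgHom.ext_of_adjoin_eq_top hx (by simpa using h)
    ext y
    exact DFunLike.congr_fun this y
  have hdvd : ∏ σ : L ≃ₐ[K] L, (X - C (σ x)) ∣ (minpoly K x).map (algebraMap K L) := by
    refine Finset.prod_dvd_of_coprime ?_ ?_
    · intro σ _ τ _ h
      exact isCoprime_X_sub_C_of_isUnit_sub (sub_ne_zero.mpr (hinj.ne h)).isUnit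
    · intro σ _
      rw [dvd_iff_isRoot, IsRoot, eval_map_algebraMap, aeval_algHom_apply σ, minpoly.aeval, map_zero]
  have hdeg : ((minpoly K x).map (algebraMap K L)).natDegree ≤
      (∏ σ : L ≃ₐ[K] L, (X - C (σ x))).natDegree := by
    rw [natDegree_map, natDegree_finsetProd_X_sub_C_eq_card, Finset.card_univ,
      ← Nat.card_eq_fintype_card, IsGalois.card_aut_eq_finrank]
    exact minpoly.natDegree_le x
  have heq := eq_of_monic_of_dvd_of_natDegree_le (monic_prod_X_sub_C _ _)
    ((minpoly.monic hint).map (algebraMap K L)) hdvd hdeg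
  rw [← eval_map_algebraMap, ← derivative_map, heq,
    ← Finset.mul_prod_erase _ _ (Finset.mem_univ (1 : L ≃ₐ[K] L))]
  simp [derivative_mul, eval_prod]

/-! ### Local monogenicity -/

/-- If `x ∉ P` and `x B ⊆ A[x] + p B` with `p B ⊆ P`, then the conductor of `A[x]` is not contained
in `P`. Multiplication by `x` maps the finite `A`-module `B / A[x]` into `p (B / A[x])`, so by
Cayley–Hamilton it is annihilated by a monic `g ≡ X ^ n` modulo `p`; then `g(x)` lies in the
conductor and `g(x) ≡ x ^ n ≢ 0` modulo `P`. -/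
theorem exists_conductor_aux {A B : Type*} [CommRing A] [CommRing B] [Algebra A B]
    [Module.Finite A B] (p : Ideal A) (P : Ideal B) [P.IsPrime] (hp : p.map (algebraMap A B) ≤ P)
    (x : B) (hxP : x ∉ P)
    (hx : ∀ b, ∃ a ∈ Algebra.adjoin A {x}, x * b - a ∈ p.map (algebraMap A B)) :
    ¬ conductor A x ≤ P := by
  let S := Subalgebra.toSubmodule (Algebra.adjoin A {x})
  have hxS : x ∈ Algebra.adjoin A {x} := Algebra.self_mem_adjoin_singleton A x
  let φ : Module.End A (B ⧸ S) := S.mapQ S (LinearMap.mulLeft A x) fun y hy ↦ mul_mem hxS hy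
  have hφ : LinearMap.range φ ≤ p • ⊤ := by
    rintro _ ⟨y, rfl⟩
    obtain ⟨b, rfl⟩ := S.mkQ_surjective y
    obtain ⟨a, ha, hab⟩ := hx b
    have h1 : φ (S.mkQ b) = S.mkQ (x * b - a) := by
      rw [map_sub, show S.mkQ a = 0 from (Submodule.Quotient.mk_eq_zero S).mpr ha, sub_zero]
      rfl
    rw [h1, ← LinearMap.range_eq_top.mpr S.mkQ_surjective, LinearMap.range_eq_map,
      ← Submodule.map_smul'']
    refine Submodule.mem_map_of_mem ?_
    rw [Ideal.smul_top_eq_map]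
    exact hab
  obtain ⟨g, hg, hdeg, hcoeff, hg0⟩ :=
    LinearMap.exists_monic_and_natDegree_eq_and_coeff_mem_pow_and_aeval_eq_zero A φ p hφ
  have hgφ (q : Polynomial A) (b : B) :
      Polynomial.aeval φ q (S.mkQ b) = S.mkQ (Polynomial.aeval x q * b) := by
    induction q using Polynomial.induction_on' generalizing b with
    | add q r hq hr => rw [map_add, LinearMap.add_apply, hq, hr, map_add, add_mul, map_add]
    | monomial n a =>
      have : ∀ n b, (φ ^ n) (S.mkQ b) = S.mkQ (x ^ n * b) := by
        intro n
        induction n with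
        | zero => simp
        | succ n ih =>
          intro b
          rw [pow_succ, Module.End.mul_apply, show φ (S.mkQ b) = S.mkQ (x * b) from rfl, ih,
            pow_succ, mul_assoc]
      rw [Polynomial.aeval_monomial, Polynomial.aeval_monomial, Module.End.mul_apply, this,
        Module.algebraMap_end_apply, ← map_smul, Algebra.smul_def, mul_assoc]
  intro hle
  have hmem : Polynomial.aeval x g ∈ P := by
    refine hle ?_
    rw [mem_conductor_iff]
    intro b
    have := hgφ g b
    rw [hg0] at this
    exact (Submodule.Quotient.mk_eq_zero S).mp this.symm
  refine hxP (Ideal.IsPrime.mem_of_pow_mem ‹_› g.natDegree ?_)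
  rw [Polynomial.aeval_eq_sum_range, Finset.sum_range_succ, hg.coeff_natDegree, one_smul] at hmem
  refine (Submodule.add_mem_iff_right P (Submodule.sum_mem _ fun i hi ↦ ?_)).mp hmem
  rw [Algebra.smul_def]
  refine Ideal.mul_mem_right _ _ (hp (Ideal.mem_map_of_mem _ ?_))
  have hi := Finset.mem_range.mp hi
  exact Ideal.pow_le_self (by omega) (hcoeff i)

/-- A subalgebra which surjects onto `B ⧸ P` and contains a uniformizer `t` at `P` surjects onto
`B ⧸ P ^ n` for every `n`. -/
theorem exists_sub_mem_pow {A B : Type*} [CommRing A] [CommRing B] [IsDedekindDomain B]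
    [Algebra A B] (S : Subalgebra A B) (P : Ideal B) [P.IsPrime] (hP0 : P ≠ ⊥)
    (hres : ∀ b, ∃ a ∈ S, b - a ∈ P) (t : B) (htS : t ∈ S) (htP : t ∈ P) (htP2 : t ∉ P ^ 2)
    (n : ℕ) (b : B) : ∃ a ∈ S, b - a ∈ P ^ n := by
  have hP : P ≤ Ideal.span {t} ⊔ P ^ 2 := by
    intro c hc
    obtain ⟨d, e, he, h⟩ := Ideal.exists_mul_add_mem_pow_succ (i := 1) hP0 t c
      (by simpa using htP) (by simpa using htP2) (by simpa using hc)
    exact Ideal.mem_span_singleton_sup.mpr ⟨d, e, he, by rw [← h, mul_comm]⟩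
  have hPn : ∀ n, P ^ n ≤ Ideal.span {t ^ n} ⊔ P ^ (n + 1) := by
    intro n
    induction n with
    | zero => simp
    | succ n ih =>
      have ht : Ideal.span {t} ≤ P := (Ideal.span_singleton_le_iff_mem _).mpr htP
      have htn : Ideal.span {t ^ n} ≤ P ^ n :=
        (Ideal.span_singleton_le_iff_mem _).mpr (Ideal.pow_mem_pow htP n)
      calc P ^ (n + 1) = P ^ n * P := pow_succ _ _
        _ ≤ (Ideal.span {t ^ n} ⊔ P ^ (n + 1)) * P := Ideal.mul_mono_left ih
        _ = Ideal.span {t ^ n} * P ⊔ P ^ (n + 2) := by rw [Ideal.sup_mul, ← pow_succ]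
        _ ≤ Ideal.span {t ^ n} * (Ideal.span {t} ⊔ P ^ 2) ⊔ P ^ (n + 2) :=
          sup_le_sup_right (Ideal.mul_mono_right hP) _
        _ = Ideal.span {t ^ (n + 1)} ⊔ (Ideal.span {t ^ n} * P ^ 2 ⊔ P ^ (n + 2)) := by
          rw [Ideal.mul_sup, Ideal.span_singleton_mul_span_singleton, ← pow_succ, sup_assoc]
        _ = Ideal.span {t ^ (n + 1)} ⊔ P ^ (n + 1 + 1) := by
          rw [sup_eq_right.mpr ((Ideal.mul_mono_left htn).trans_eq (pow_add P n 2).symm)]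
  induction n generalizing b with
  | zero => exact ⟨0, zero_mem _, by simp⟩
  | succ n ih =>
    obtain ⟨a, ha, hab⟩ := ih b
    obtain ⟨d, e, he, h⟩ := Ideal.mem_span_singleton_sup.mp (hPn n hab)
    obtain ⟨a', ha', hda⟩ := hres d
    refine ⟨a + t ^ n * a', add_mem ha (mul_mem (pow_mem htS n) ha'), ?_⟩
    have : b - (a + t ^ n * a') = t ^ n * (d - a') + e := by linear_combination -h
    rw [this]
    refine add_mem ?_ he
    rw [pow_succ]
    exact Ideal.mul_mem_mul (Ideal.pow_mem_pow htP n) hda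

/-- A residue class modulo `P ^ 2` all of whose members `x` generate `(B ⧸ P)ˣ` and give a
uniformizer `x ^ q - x` at `P`, where `q = #(B ⧸ P)`. -/
theorem exists_generator_mod_sq {B : Type*} [CommRing B] [IsDedekindDomain B] (P : Ideal B)
    [P.IsMaximal] (hP0 : P ≠ ⊥) [Finite (B ⧸ P)] :
    ∃ (u : B) (q : ℕ), u ∉ P ∧ (∀ b, b ∈ P ∨ ∃ n : ℕ, b - u ^ n ∈ P) ∧
      ∀ x, x - u ∈ P ^ 2 → x ^ q - x ∈ P ∧ x ^ q - x ∉ P ^ 2 := by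
  classical
  let := Ideal.Quotient.field P
  have := Fintype.ofFinite (B ⧸ P)
  obtain ⟨g, hg⟩ := IsCyclic.exists_generator (α := (B ⧸ P)ˣ)
  obtain ⟨u₀, hu₀⟩ := Ideal.Quotient.mk_surjective (I := P) (g : B ⧸ P)
  set q := Fintype.card (B ⧸ P) with hq
  have hq1 : 1 < q := Fintype.one_lt_card
  have hFrob (x : B) : x ^ q - x ∈ P := by
    rw [← Ideal.Quotient.eq, map_pow, FiniteField.pow_card]
  obtain ⟨π, hπ, hπ2⟩ := Ideal.exists_mem_pow_notMem_pow_succ P hP0 Ideal.IsPrime.ne_top' 1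
  rw [pow_one] at hπ
  have key (x y : B) (hxy : x - y ∈ P) : x ^ q - y ^ q ∈ P ^ 2 := by
    rw [← geom_sum₂_mul, pow_two]
    refine Ideal.mul_mem_mul ?_ hxy
    rw [← Ideal.Quotient.eq_zero_iff_mem]
    rw [← Ideal.Quotient.eq] at hxy
    simp only [map_sum, map_mul, map_pow, hxy]
    rw [geom_sum₂_self, FiniteField.cast_card_eq_zero, zero_mul]
  have main (u : B) (hu : u - u₀ ∈ P) (hu2 : u ^ q - u ∉ P ^ 2) :
      ∃ (u : B) (q : ℕ), u ∉ P ∧ (∀ b, b ∈ P ∨ ∃ n : ℕ, b - u ^ n ∈ P) ∧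
        ∀ x, x - u ∈ P ^ 2 → x ^ q - x ∈ P ∧ x ^ q - x ∉ P ^ 2 := by
    have hug : Ideal.Quotient.mk P u = g := by rw [← hu₀]; exact Ideal.Quotient.eq.mpr hu
    refine ⟨u, q, ?_, ?_, ?_⟩
    · rw [← Ideal.Quotient.eq_zero_iff_mem, hug]
      exact g.ne_zero
    · intro b
      refine or_iff_not_imp_left.mpr fun hb ↦ ?_
      rw [← Ideal.Quotient.eq_zero_iff_mem] at hb
      obtain ⟨n, hn⟩ := (mem_powers_iff_mem_zpowers.mpr (hg (Units.mk0 _ hb)))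
      refine ⟨n, ?_⟩
      rw [← Ideal.Quotient.eq, map_pow, hug, ← Units.val_pow_eq_pow_val]
      exact (congrArg Units.val hn).symm
    · intro x hx
      refine ⟨hFrob x, fun h ↦ hu2 ?_⟩
      have h1 := key x u (Ideal.pow_le_self two_ne_zero hx)
      have : u ^ q - u = (x ^ q - x) - (x ^ q - u ^ q) + (x - u) := by ring
      rw [this]
      exact add_mem (sub_mem h h1) hx
  -- Modulo `P ^ 2`, `u ↦ u ^ q` depends only on `u` modulo `P` (this is `key`), so replacing `u₀` by
  -- `u₀ + π` changes `u ^ q - u` by `-π`: one of `u₀`, `u₀ + π` is a valid choice.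
  by_cases h : u₀ ^ q - u₀ ∈ P ^ 2
  · refine main (u₀ + π) (by simpa using hπ) fun h' ↦ hπ2 ?_
    have h1 := key (u₀ + π) u₀ (by simpa using hπ)
    have : π = (u₀ ^ q - u₀) + ((u₀ + π) ^ q - u₀ ^ q) - ((u₀ + π) ^ q - (u₀ + π)) := by ring
    rw [this]
    exact sub_mem (add_mem h h1) h'
  · exact main u₀ (by simp) h

/-- Local monogenicity: for every `P` with finite residue field there is `x` such that `A[x]` and
`B` agree locally at `P`. -/
theorem exists_conductor_not_le {A B : Type*} [CommRing A] [CommRing B] [IsDomain A]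
    [IsDedekindDomain B] [Algebra A B] [Module.Finite A B] [FaithfulSMul A B]
    (P : Ideal B) [P.IsMaximal] (hP0 : P ≠ ⊥) [Finite (B ⧸ P)] :
    ∃ x : B, ¬ conductor A x ≤ P := by
  obtain ⟨u, q, huP, hgen, hu⟩ := exists_generator_mod_sq P hP0
  set p := P.comap (algebraMap A B) with hp
  have hpP : p.map (algebraMap A B) ≤ P := Ideal.map_comap_le
  have hp0 : p.map (algebraMap A B) ≠ ⊥ := by
    rw [ne_eq, Ideal.map_eq_bot_iff_of_injective (FaithfulSMul.algebraMap_injective A B)]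
    exact Ideal.IsIntegral.comap_ne_bot A hP0
  have hprime : Prime P := Ideal.prime_of_isPrime hP0 inferInstance
  -- Write `p B = P ^ e * J` with `P ∤ J`. An `x ∈ J` with `x ≡ u` modulo `P ^ 2` works: from
  -- `B = A[x] + P ^ e` one gets `x B ⊆ A[x] + x P ^ e ⊆ A[x] + p B`.
  obtain ⟨J, hpJ, hJ⟩ :=
    (FiniteMultiplicity.of_prime_left hprime hp0).exists_eq_pow_mul_and_not_dvd
  have hcop : IsCoprime (P ^ 2) J := by
    refine IsCoprime.pow_left ?_
    rw [Ideal.isCoprime_iff_sup_eq]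
    by_contra hne
    have h : P = P ⊔ J := Ideal.IsMaximal.eq_of_le ‹_› hne le_sup_left
    exact hJ (Ideal.dvd_iff_le.mpr (h ▸ le_sup_right))
  obtain ⟨i, hi, j, hj, hij⟩ := Ideal.isCoprime_iff_exists.mp hcop
  have hxu : u * j - u ∈ P ^ 2 := by
    have : u * j - u = -u * i := by linear_combination u * hij
    rw [this]
    exact Ideal.mul_mem_left _ _ hi
  have hxP : u * j - u ∈ P := Ideal.pow_le_self two_ne_zero hxu
  set x := u * j with hx
  have hxJ : x ∈ J := Ideal.mul_mem_left _ _ hj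
  have hxS : x ∈ Algebra.adjoin A {x} := Algebra.self_mem_adjoin_singleton A x
  refine ⟨x, exists_conductor_aux p P hpP x (fun h ↦ huP ?_) fun b ↦ ?_⟩
  · simpa using sub_mem h hxP
  · obtain ⟨a, ha, hab⟩ := exists_sub_mem_pow (Algebra.adjoin A {x}) P hP0 (fun b ↦ by
      obtain h | ⟨n, h⟩ := hgen b
      · exact ⟨0, zero_mem _, by simpa using h⟩
      · refine ⟨x ^ n, pow_mem hxS n, ?_⟩
        have : b - x ^ n = (b - u ^ n) - (x ^ n - u ^ n) := by ring
        rw [this]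
        exact sub_mem h (Ideal.mem_of_dvd _ (sub_dvd_pow_sub_pow _ _ _) hxP))
        (x ^ q - x) (sub_mem (pow_mem hxS q) hxS) (hu x hxu).1 (hu x hxu).2
        (multiplicity P (p.map (algebraMap A B))) b
    refine ⟨x * a, mul_mem hxS ha, ?_⟩
    rw [← mul_sub, hpJ, mul_comm x]
    exact Ideal.mul_mem_mul hab hxJ

/-! ### Generators and conductors in towers -/

theorem conductor_le_of_tower {A R B : Type*} [CommRing A] [CommRing R] [CommRing B] [Algebra A R]
    [Algebra A B] [Algebra R B] [IsScalarTower A R B] (x : B) :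
    conductor A x ≤ conductor R x := by
  intro c hc
  rw [mem_conductor_iff] at hc ⊢
  intro b
  have h : Algebra.adjoin A {x} ≤ (Algebra.adjoin R {x}).restrictScalars A :=
    Algebra.adjoin_le (by simp)
  exact h (hc b)

/-- If the conductor of `A[x]` in `B` is nonzero then `x` generates `L = Frac B` over `K`: for `c`
in the conductor, `b / d = (c * b) / (c * d)` is a quotient of elements of `A[x]`. -/
theorem adjoin_eq_top_of_conductor_ne_bot (A K L : Type*) {B : Type*} [CommRing A]
    [Field K] [CommRing B]
    [Field L] [Algebra A K] [Algebra B L] [Algebra A B] [Algebra K L] [Algebra A L]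
    [IsScalarTower A K L] [IsScalarTower A B L] [IsDomain B] [IsFractionRing B L]
    [Algebra.IsAlgebraic K L] (x : B) (hx : conductor A x ≠ ⊥) :
    Algebra.adjoin K {algebraMap B L x} = ⊤ := by
  obtain ⟨c, hc, hc0⟩ := Submodule.exists_mem_ne_zero_of_ne_bot hx
  have hmap (a : B) (ha : a ∈ Algebra.adjoin A {x}) :
      algebraMap B L a ∈ Algebra.adjoin K {algebraMap B L x} := by
    have h : Algebra.adjoin A {x} ≤ ((Algebra.adjoin K {algebraMap B L x}).restrictScalars A).comap
        (IsScalarTower.toAlgHom A B L) :=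
      Algebra.adjoin_le (by simp)
    exact h ha
  rw [Algebra.eq_top_iff]
  intro y
  obtain ⟨b, d, hd, rfl⟩ := IsFractionRing.div_surjective (A := B) y
  have hcL : algebraMap B L c ≠ 0 := by simpa using hc0
  have h1 := hmap _ (mem_conductor_iff.mp hc b)
  have h2 := Subalgebra.inv_mem_of_algebraic (Algebra.adjoin K {algebraMap B L x})
    (x := ⟨_, hmap _ (mem_conductor_iff.mp hc d)⟩) (Algebra.IsAlgebraic.isAlgebraic _)
  convert mul_mem h1 h2 using 1
  change _ = algebraMap B L (c * b) * (algebraMap B L (c * d))⁻¹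
  rw [map_mul, map_mul, ← div_eq_mul_inv, mul_div_mul_left _ _ hcL]

theorem algebraMap_aeval_derivative_minpoly (A K L : Type*) {B : Type*} [CommRing A] [Field K]
    [CommRing B] [Field L] [Algebra A K] [Algebra B L] [Algebra A B] [Algebra K L] [Algebra A L]
    [IsScalarTower A K L] [IsScalarTower A B L] [IsDomain A] [IsIntegrallyClosed A]
    [IsFractionRing A K] [IsDomain B] [FaithfulSMul B L] [Algebra.IsIntegral A B]
    [Module.IsTorsionFree A B] (x : B) :
    algebraMap B L (Polynomial.aeval x (minpoly A x).derivative) =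
      Polynomial.aeval (algebraMap B L x) (minpoly K (algebraMap B L x)).derivative := by
  rw [minpoly.isIntegrallyClosed_eq_field_fractions K L
      (Algebra.IsIntegral.isIntegral (R := A) x),
    Polynomial.derivative_map, Polynomial.aeval_map_algebraMap, Polynomial.aeval_algebraMap_apply]

/-! ### The different of a biquadratic extension -/

/-- If `L / F` is quadratic with nontrivial automorphism `s`, then `F` is the fixed field of `s`, and
`f'(x) = x - s x` for the minimal polynomial `f` over `F` of any generator `x` of `L / F`. -/
theorem exists_involution {k L : Type*} [Field k] [Field L] [Algebra k L] [FiniteDimensional k L]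
    [IsGalois k L] (F : IntermediateField k L) (hF : finrank F L = 2) :
    ∃ s : L ≃ₐ[k] L, (∀ y, y ∈ F ↔ s y = y) ∧ ∀ x : L, Algebra.adjoin F {x} = ⊤ →
      Polynomial.aeval x (minpoly F x).derivative = x - s x := by
  classical
  have hcard : ((Finset.univ : Finset (L ≃ₐ[F] L)).erase 1).card = 1 := by
    rw [Finset.card_erase_of_mem (Finset.mem_univ _), Finset.card_univ, ← Nat.card_eq_fintype_card,
      IsGalois.card_aut_eq_finrank, hF]
  obtain ⟨σ, hσ⟩ := Finset.card_eq_one.mp hcard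
  refine ⟨σ.restrictScalars k, fun y ↦ ⟨fun hy ↦ σ.commutes ⟨y, hy⟩, fun hy ↦ ?_⟩, fun x hx ↦ ?_⟩
  · have h : y ∈ (⊥ : IntermediateField F L) := by
      rw [IsGalois.mem_bot_iff_fixed]
      intro τ
      by_cases hτ : τ = 1
      · simp [hτ]
      · have : τ ∈ ({σ} : Finset _) := by rw [← hσ]; simp [hτ]
        rw [Finset.mem_singleton.mp this]
        exact hy
    obtain ⟨z, rfl⟩ := IntermediateField.mem_bot.mp h
    exact z.2
  · rw [aeval_derivative_minpoly_eq_prod x hx, hσ, Finset.prod_singleton]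
    rfl

/-- Inclusion of ideals may be checked locally, in the form: at each maximal `P`, some ideal `C` not
contained in `P` satisfies `C * E ≤ D`. -/
theorem ideal_le_of_locally {B : Type*} [CommRing B] {D E : Ideal B}
    (h : ∀ P : Ideal B, P.IsMaximal → ∃ C : Ideal B, ¬ C ≤ P ∧ C * E ≤ D) : E ≤ D := by
  have htop : D.colon (E : Set B) = ⊤ := by
    by_contra hne
    obtain ⟨P, hP, hle⟩ := Ideal.exists_le_maximal _ hne
    obtain ⟨C, hC, hCE⟩ := h P hP
    refine hC (le_trans (fun c hc ↦ ?_) hle)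
    exact Submodule.mem_colon.mpr fun e he ↦ hCE (Ideal.mul_mem_mul hc he)
  intro e he
  have := Submodule.mem_colon.mp ((Ideal.eq_top_iff_one _).mp htop) e he
  simpa using this

/-- The different of `L / k` is the product of the differents of `L / k₁`, `L / k₂` and `L / k₃`. -/
theorem differentIdeal_eq_prod {k L : Type*} [Field k] [Field L] [NumberField k]
    [NumberField L] [Algebra k L] [IsGalois k L] (hdeg : finrank k L = 4)
    (k₁ k₂ k₃ : IntermediateField k L)
    [NumberField k₁] [NumberField k₂] [NumberField k₃]
    (h1 : finrank k₁ L = 2) (h2 : finrank k₂ L = 2) (h3 : finrank k₃ L = 2)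
    (h12 : k₁ ≠ k₂) (h13 : k₁ ≠ k₃) (h23 : k₂ ≠ k₃) :
    differentIdeal (𝓞 k) (𝓞 L) = differentIdeal (𝓞 k₁) (𝓞 L) * differentIdeal (𝓞 k₂) (𝓞 L) *
      differentIdeal (𝓞 k₃) (𝓞 L) := by
  classical
  obtain ⟨s₁, hs₁, hd₁⟩ := exists_involution k₁ h1
  obtain ⟨s₂, hs₂, hd₂⟩ := exists_involution k₂ h2
  obtain ⟨s₃, hs₃, hd₃⟩ := exists_involution k₃ h3
  have hne {F : IntermediateField k L} {s : L ≃ₐ[k] L} (hF : finrank F L = 2)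
      (hs : ∀ y, y ∈ F ↔ s y = y) : s ≠ 1 := by
    rintro rfl
    have : F = ⊤ := by ext y; simp [hs]
    subst this
    simp at hF
  have hdist {F F' : IntermediateField k L} {s s' : L ≃ₐ[k] L} (hs : ∀ y, y ∈ F ↔ s y = y)
      (hs' : ∀ y, y ∈ F' ↔ s' y = y) (h : F ≠ F') : s ≠ s' := by
    rintro rfl
    exact h (by ext y; rw [hs, hs'])
  have d12 := hdist hs₁ hs₂ h12
  have d13 := hdist hs₁ hs₃ h13
  have d23 := hdist hs₂ hs₃ h23
  have huniv : (Finset.univ : Finset (L ≃ₐ[k] L)).erase 1 = {s₁, s₂, s₃} := by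
    symm
    refine Finset.eq_of_subset_of_card_le ?_ ?_
    · intro s hs
      simp only [Finset.mem_insert, Finset.mem_singleton] at hs
      rcases hs with rfl | rfl | rfl
      · simpa using hne h1 hs₁
      · simpa using hne h2 hs₂
      · simpa using hne h3 hs₃
    · rw [Finset.card_erase_of_mem (Finset.mem_univ _), Finset.card_univ,
        ← Nat.card_eq_fintype_card, IsGalois.card_aut_eq_finrank, hdeg,
        Finset.card_eq_three.mpr ⟨s₁, s₂, s₃, d12, d13, d23, rfl⟩]
  have key (P : Ideal (𝓞 L)) (hP : P.IsMaximal) : ∃ C C' : Ideal (𝓞 L), ¬ C ≤ P ∧ ¬ C' ≤ P ∧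
      C * differentIdeal (𝓞 k) (𝓞 L) = C' * (differentIdeal (𝓞 k₁) (𝓞 L) *
        differentIdeal (𝓞 k₂) (𝓞 L) * differentIdeal (𝓞 k₃) (𝓞 L)) := by
    have hP0 : P ≠ ⊥ := Ring.ne_bot_of_isMaximal_of_not_isField hP (RingOfIntegers.not_isField L)
    have : Finite (𝓞 L ⧸ P) := Ideal.finiteQuotientOfFreeOfNeBot P hP0
    obtain ⟨x, hx⟩ := exists_conductor_not_le (A := 𝓞 k) P hP0
    have hx0 : conductor (𝓞 k) x ≠ ⊥ := fun h ↦ hx (h ▸ bot_le)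
    have hc (F : IntermediateField k L) [NumberField F] :
        ¬ conductor (𝓞 F) x ≤ P ∧
        Algebra.adjoin F {algebraMap (𝓞 L) L x} = ⊤ := by
      have hle : conductor (𝓞 k) x ≤ conductor (𝓞 F) x := conductor_le_of_tower x
      have hn : ¬ conductor (𝓞 F) x ≤ P := fun h ↦ hx (hle.trans h)
      exact ⟨hn, adjoin_eq_top_of_conductor_ne_bot (𝓞 F) F L x fun h ↦ hn (h ▸ bot_le)⟩
    have hk := adjoin_eq_top_of_conductor_ne_bot (𝓞 k) k L x hx0
    obtain ⟨c1, a1⟩ := hc k₁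
    obtain ⟨c2, a2⟩ := hc k₂
    obtain ⟨c3, a3⟩ := hc k₃
    refine ⟨conductor (𝓞 k) x, conductor (𝓞 k₁) x * conductor (𝓞 k₂) x * conductor (𝓞 k₃) x, hx,
      ?_, ?_⟩
    · have hp := hP.isPrime
      simp only [hp.mul_le, not_or]
      exact ⟨⟨c1, c2⟩, c3⟩
    · have hder : Polynomial.aeval x (minpoly (𝓞 k) x).derivative =
          Polynomial.aeval x (minpoly (𝓞 k₁) x).derivative *
          Polynomial.aeval x (minpoly (𝓞 k₂) x).derivative *
          Polynomial.aeval x (minpoly (𝓞 k₃) x).derivative := by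
        apply FaithfulSMul.algebraMap_injective (𝓞 L) L
        rw [map_mul, map_mul, algebraMap_aeval_derivative_minpoly (𝓞 k) k L,
          algebraMap_aeval_derivative_minpoly (𝓞 k₁) k₁ L,
          algebraMap_aeval_derivative_minpoly (𝓞 k₂) k₂ L,
          algebraMap_aeval_derivative_minpoly (𝓞 k₃) k₃ L, hd₁ _ a1, hd₂ _ a2, hd₃ _ a3,
          aeval_derivative_minpoly_eq_prod _ hk, huniv, Finset.prod_insert (by simp [d12, d13]),
          Finset.prod_insert (by simp [d23]), Finset.prod_singleton, mul_assoc]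
      -- Conductor times different is the principal ideal generated by `f'(x)`.
      have e := conductor_mul_differentIdeal (𝓞 k) k L x hk
      have e1 := conductor_mul_differentIdeal (𝓞 k₁) k₁ L x a1
      have e2 := conductor_mul_differentIdeal (𝓞 k₂) k₂ L x a2
      have e3 := conductor_mul_differentIdeal (𝓞 k₃) k₃ L x a3
      rw [e, hder, ← Ideal.span_singleton_mul_span_singleton,
        ← Ideal.span_singleton_mul_span_singleton, ← e1, ← e2, ← e3]
      ring
  apply le_antisymm
  · refine ideal_le_of_locally fun P hP ↦ ?_
    obtain ⟨C, C', hC, -, h⟩ := key P hP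
    exact ⟨C, hC, h ▸ Ideal.mul_le_right⟩
  · refine ideal_le_of_locally fun P hP ↦ ?_
    obtain ⟨C, C', -, hC', h⟩ := key P hP
    exact ⟨C', hC', h ▸ Ideal.mul_le_right⟩

/-! ### The discriminant formula -/

/-- For a biquadratic extension `L/k` of number fields with quadratic intermediate fields
`k₁, k₂, k₃`, one has `|Δ_L · Δ_k²| = |Δ_{k₁} · Δ_{k₂} · Δ_{k₃}|`. -/
theorem biquadratic_discriminant {k L : Type*} [Field k] [Field L] [NumberField k]
    [NumberField L] [Algebra k L] [IsGalois k L] (hdeg : finrank k L = 4)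
    (hgal : Nonempty ((L ≃ₐ[k] L) ≃* (Multiplicative (ZMod 2) × Multiplicative (ZMod 2))))
    (k₁ k₂ k₃ : IntermediateField k L)
    [NumberField k₁] [NumberField k₂] [NumberField k₃]
    (h1 : finrank k k₁ = 2) (h2 : finrank k k₂ = 2) (h3 : finrank k k₃ = 2)
    (h12 : k₁ ≠ k₂) (h13 : k₁ ≠ k₃) (h23 : k₂ ≠ k₃) :
    |NumberField.discr L * NumberField.discr k ^ 2| =
      |NumberField.discr k₁ * NumberField.discr k₂ * NumberField.discr k₃| := by
  have htop {F : IntermediateField k L} (hF : finrank k F = 2) : finrank F L = 2 := by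
    have := finrank_mul_finrank k F L
    rw [hF, hdeg] at this
    omega
  have hN := congrArg Ideal.absNorm (differentIdeal_eq_prod hdeg k₁ k₂ k₃ (htop h1) (htop h2)
    (htop h3) h12 h13 h23)
  rw [map_mul, map_mul] at hN
  have e := natAbs_discr_eq_absNorm_differentIdeal_mul_natAbs_discr_pow k (𝓞 k) L (𝓞 L)
  have e1 := natAbs_discr_eq_absNorm_differentIdeal_mul_natAbs_discr_pow k₁ (𝓞 k₁) L (𝓞 L)
  have e2 := natAbs_discr_eq_absNorm_differentIdeal_mul_natAbs_discr_pow k₂ (𝓞 k₂) L (𝓞 L)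
  have e3 := natAbs_discr_eq_absNorm_differentIdeal_mul_natAbs_discr_pow k₃ (𝓞 k₃) L (𝓞 L)
  rw [hdeg] at e
  rw [htop h1] at e1
  rw [htop h2] at e2
  rw [htop h3] at e3
  rw [← Int.natCast_natAbs, ← Int.natCast_natAbs, Nat.cast_inj]
  simp only [Int.natAbs_mul, Int.natAbs_pow]
  have hL : (discr L).natAbs ≠ 0 := Int.natAbs_ne_zero.mpr (discr_ne_zero L)
  generalize (discr L).natAbs = dL at *
  generalize (discr k).natAbs = dk at *
  generalize (discr k₁).natAbs = d1 at *
  generalize (discr k₂).natAbs = d2 at *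
  generalize (discr k₃).natAbs = d3 at *
  generalize Ideal.absNorm (differentIdeal (𝓞 k) (𝓞 L)) = N at *
  generalize Ideal.absNorm (differentIdeal (𝓞 k₁) (𝓞 L)) = N1 at *
  generalize Ideal.absNorm (differentIdeal (𝓞 k₂) (𝓞 L)) = N2 at *
  generalize Ideal.absNorm (differentIdeal (𝓞 k₃) (𝓞 L)) = N3 at *
  -- The product of the three tower formulas over `kᵢ` contains `dL ^ 3`, and the one over `k`
  -- contains `dL`; comparing them gives the square of the claim, up to the nonzero factor `dL`.
  have hsq : dL * (dL * dk ^ 2) ^ 2 = dL * (d1 * d2 * d3) ^ 2 := by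
    calc dL * (dL * dk ^ 2) ^ 2 = (dL * dL * dL) * dk ^ 4 := by ring
      _ = ((N1 * d1 ^ 2) * (N2 * d2 ^ 2) * (N3 * d3 ^ 2)) * dk ^ 4 := by rw [← e1, ← e2, ← e3]
      _ = (N1 * N2 * N3 * dk ^ 4) * (d1 * d2 * d3) ^ 2 := by ring
      _ = dL * (d1 * d2 * d3) ^ 2 := by rw [← hN, ← e]
  exact Nat.pow_left_injective two_ne_zero (Nat.eq_of_mul_eq_mul_left (Nat.pos_of_ne_zero hL) hsq)
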